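/- Let d be a positive integer, J ⊊ I two nonzero square-free monomial ideals of S with I generated by square-free monomials of degree ≥ d and J generated by square-free monomials of degree ≥ d+1, and let H be an ideal generated by square-free monomials of degree d+1. Then depth_S (I/J) = d if and only if depth_S ((I+H)/J) = d. -/

import Mathlib

open MvPolynomial

/-- The square-free monomial `∏ i ∈ T, X i` associated to a set `T` of variables. -/
noncomputable def sqMon (K : Type) [Field K] {n : ℕ} (T : Finset (Fin n)) :
    MvPolynomial (Fin n) K :=
  ∏ i ∈ T, X i

/-- `GenBySqMonOfDeg K P I` means: `I` is generated by square-free monomials whose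
degrees satisfy the predicate `P`. -/
def GenBySqMonOfDeg (K : Type) [Field K] {n : ℕ} (P : ℕ → Prop)
    (I : Ideal (MvPolynomial (Fin n) K)) : Prop :=
  ∃ G : Set (Finset (Fin n)), (∀ T ∈ G, P T.card) ∧ I = Ideal.span (sqMon K '' G)

/-- `rho K d I` : the number of square-free monomials of degree `d` belonging to `I`. -/
noncomputable def rho (K : Type) [Field K] {n : ℕ} (d : ℕ)
    (I : Ideal (MvPolynomial (Fin n) K)) : ℕ :=
  Set.ncard {T : Finset (Fin n) | T.card = d ∧ sqMon K T ∈ I}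

/-- The maximal graded ideal `(x_1, …, x_n)` of `K[x_1, …, x_n]`. -/
noncomputable def maxGraded (K : Type) [Field K] (n : ℕ) :
    Ideal (MvPolynomial (Fin n) K) :=
  Ideal.span (Set.range (X : Fin n → MvPolynomial (Fin n) K))

/-- The depth of the module `M` with respect to the ideal `I` : the supremum of the
lengths of `M`-regular sequences consisting of elements of `I`. -/
noncomputable def moduleDepth {R : Type} [CommRing R] (I : Ideal R)
    (M : Type) [AddCommGroup M] [Module R M] : ℕ∞ :=
  sSup {k : ℕ∞ | ∃ rs : List R, k = (rs.length : ℕ∞) ∧ (∀ r ∈ rs, r ∈ I) ∧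
    RingTheory.Sequence.IsRegular M rs}

/-- The `R`-module `I/J` (more precisely `I/(I ∩ J)`, which is `I/J` when `J ≤ I`). -/
noncomputable abbrev idealQuot {R : Type} [CommRing R] (I J : Ideal R) : Type :=
  ↥I ⧸ (Submodule.comap I.subtype (J : Submodule R R))

/-!
By the Rees theorem, `k ≤ depth M` says that `Ext^i (S ⧸ m) M = 0` for all `i < k`. The long exact
`Ext` sequence of `0 → I/J → (I + H)/J → (I + H)/I → 0` then gives the result as soon as this
vanishing is known for `I/J` with `k = d` and for `(I + H)/I` with `k = d + 1`.

Both follow from one estimate: if every square-free monomial of `I` outside `J` has degree at least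
`k`, then `Ext^i (S ⧸ m) (I/J) = 0` for `i < k`. Adding to `J` such a monomial `x_T` that is maximal
for divisibility produces a factor `((x_T) + J)/J ≅ S ⧸ (J : x_T) = S ⧸ (x_i | i ∉ T)`, on which the
variables `x_i`, `i ∈ T`, form a regular sequence of length `|T| ≥ k`.
-/

open CategoryTheory Abelian RingTheory.Sequence

section ExtVanishing

universe w v u

variable {C : Type u} [Category.{v} C] [Abelian C] [HasExt.{w} C] {X Y : C} {k l : ℕ}

/-- `Ext^i(X, Y) = 0` for all `i < k`. For `X = R ⧸ m` and `Y` a module with `m Y ≠ Y` this is the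
homological form of `k ≤ depth Y`; unlike the latter it also holds for `Y = 0`. -/
def ExtVanishesBelow (k : ℕ) (X Y : C) : Prop :=
  ∀ i < k, Subsingleton (Ext X Y i)

namespace ExtVanishesBelow

lemma mono (hkl : k ≤ l) (h : ExtVanishesBelow l X Y) : ExtVanishesBelow k X Y :=
  fun i hi => h i (hi.trans_le hkl)

lemma of_isZero (hY : Limits.IsZero Y) : ExtVanishesBelow k X Y := fun i _ =>
  AddCommGrpCat.subsingleton_of_isZero ((extFunctorObj X i).map_isZero hY)

variable {S : ShortComplex C}

lemma of_shortExact_middle (hS : S.ShortExact) (h₁ : ExtVanishesBelow k X S.X₁)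
    (h₃ : ExtVanishesBelow k X S.X₃) : ExtVanishesBelow k X S.X₂ := fun i hi =>
  have := h₁ i hi
  have := h₃ i hi
  subsingleton_of_forall_eq 0 fun e => by
    obtain ⟨e₁, rfl⟩ := Ext.covariant_sequence_exact₂ X hS e (Subsingleton.elim _ _)
    rw [Subsingleton.elim e₁ 0, Ext.zero_comp]

lemma of_shortExact_left (hS : S.ShortExact) (h₂ : ExtVanishesBelow (k + 1) X S.X₂)
    (h₃ : ExtVanishesBelow k X S.X₃) : ExtVanishesBelow (k + 1) X S.X₁ := by
  intro i hi
  have := h₂ i hi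
  cases i with
  | zero =>
    have := hS.mono_f
    exact (Ext.postcomp_mk₀_injective_of_mono X S.f).subsingleton
  | succ j =>
    have := h₃ j (by lia)
    refine subsingleton_of_forall_eq 0 fun e => ?_
    obtain ⟨e₃, rfl⟩ := Ext.covariant_sequence_exact₁ X hS e (Subsingleton.elim _ _) rfl
    rw [Subsingleton.elim e₃ 0, Ext.zero_comp]

end ExtVanishesBelow

end ExtVanishing

section Depth

lemma support_quotient_eq_zeroLocus {R : Type*} [CommRing R] (I : Ideal R) :
    Module.support R (R ⧸ I) = PrimeSpectrum.zeroLocus I := by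
  rw [Module.support_eq_zeroLocus, Ideal.annihilator_quotient]

variable {R : Type} [CommRing R] [IsNoetherianRing R] {m : Ideal R}

section

variable {M : Type} [AddCommGroup M] [Module R M] [Module.Finite R M] {d : ℕ}

lemma extVanishesBelow_length_of_isRegular (hM : m • (⊤ : Submodule R M) < ⊤) {rs : List R}
    (hrs : ∀ r ∈ rs, r ∈ m) (hreg : IsRegular M rs) :
    ExtVanishesBelow rs.length (ModuleCat.of R (R ⧸ m)) (ModuleCat.of R M) :=
  ModuleCat.subsingleton_ext_of_exists_isRegular m (ModuleCat.of R (R ⧸ m))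
    (support_quotient_eq_zeroLocus m).subset (ModuleCat.of R M) hM rs hrs hreg

lemma extVanishesBelow_length_of_isWeaklyRegular (hM : m • (⊤ : Submodule R M) < ⊤) {rs : List R}
    (hrs : ∀ r ∈ rs, r ∈ m) (hreg : IsWeaklyRegular M rs) :
    ExtVanishesBelow rs.length (ModuleCat.of R (R ⧸ m)) (ModuleCat.of R M) :=
  have hle : Ideal.ofList rs • (⊤ : Submodule R M) ≤ m • ⊤ :=
    Submodule.smul_mono_left (Ideal.span_le.mpr hrs)
  extVanishesBelow_length_of_isRegular hM hrs ⟨hreg, (hle.trans_lt hM).ne'⟩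

lemma le_moduleDepth_iff (hM : m • (⊤ : Submodule R M) < ⊤) (k : ℕ) :
    (k : ℕ∞) ≤ moduleDepth m M ↔
      ExtVanishesBelow k (ModuleCat.of R (R ⧸ m)) (ModuleCat.of R M) := by
  constructor
  · intro hk i hi
    obtain ⟨_, ⟨rs, rfl, hrs, hreg⟩, hlt⟩ :=
      lt_sSup_iff.mp ((Nat.cast_lt.mpr hi).trans_le hk)
    exact extVanishesBelow_length_of_isRegular hM hrs hreg i (Nat.cast_lt.mp hlt)
  · intro hk
    obtain ⟨rs, rfl, hrs, hreg⟩ := ModuleCat.exists_isRegular_of_exists_subsingleton_ext m k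
      (ModuleCat.of R M) hM (ModuleCat.of R (R ⧸ m)) (support_quotient_eq_zeroLocus m) hk
    exact le_sSup ⟨rs, rfl, hrs, hreg⟩

lemma moduleDepth_eq_iff (hM : m • (⊤ : Submodule R M) < ⊤) :
    moduleDepth m M = d ↔
      ExtVanishesBelow d (ModuleCat.of R (R ⧸ m)) (ModuleCat.of R M) ∧
        ¬ ExtVanishesBelow (d + 1) (ModuleCat.of R (R ⧸ m)) (ModuleCat.of R M) := by
  rw [← le_moduleDepth_iff hM, ← le_moduleDepth_iff hM, Nat.cast_add_one,
    ENat.add_one_le_iff (ENat.natCast_ne_top d), eq_comm, eq_iff_le_not_lt]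

end

lemma moduleDepth_eq_iff_of_shortExact {S : ShortComplex (ModuleCat.{0} R)} (hS : S.ShortExact)
    [Module.Finite R S.X₁] [Module.Finite R S.X₂] {d : ℕ}
    (hm₁ : m • (⊤ : Submodule R S.X₁) < ⊤) (hm₂ : m • (⊤ : Submodule R S.X₂) < ⊤)
    (h₁ : ExtVanishesBelow d (ModuleCat.of R (R ⧸ m)) S.X₁)
    (h₃ : ExtVanishesBelow (d + 1) (ModuleCat.of R (R ⧸ m)) S.X₃) :
    moduleDepth m S.X₁ = d ↔ moduleDepth m S.X₂ = d := by
  have h₃' := h₃.mono d.le_succ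
  have hsucc : ExtVanishesBelow (d + 1) (ModuleCat.of R (R ⧸ m)) S.X₁ ↔
      ExtVanishesBelow (d + 1) (ModuleCat.of R (R ⧸ m)) S.X₂ :=
    ⟨fun h => h.of_shortExact_middle hS h₃, fun h => h.of_shortExact_left hS h₃'⟩
  rw [moduleDepth_eq_iff hm₁, moduleDepth_eq_iff hm₂]
  exact and_congr (iff_of_true h₁ (h₁.of_shortExact_middle hS h₃')) hsucc.not

end Depth

section IdealQuot

variable {R : Type} [CommRing R] {J J' I : Ideal R}

/-- The map `J'/J → I/J` induced by the inclusion of ideals `J' ≤ I`. -/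
noncomputable def idealQuotInclusion (J : Ideal R) (hJ' : J' ≤ I) :
    idealQuot J' J →ₗ[R] idealQuot I J :=
  Submodule.mapQ _ _ (Submodule.inclusion hJ') <| by
    rw [← Submodule.comap_comp, Submodule.subtype_comp_inclusion]

/-- The complex `0 → J'/J → I/J → I/J' → 0` attached to ideals `J ≤ J' ≤ I`. -/
noncomputable abbrev idealQuotShortComplex (hJ : J ≤ J') (hJ' : J' ≤ I) :
    ShortComplex (ModuleCat.{0} R) where
  X₁ := ModuleCat.of R (idealQuot J' J)
  X₂ := ModuleCat.of R (idealQuot I J)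
  X₃ := ModuleCat.of R (idealQuot I J')
  f := ModuleCat.ofHom (idealQuotInclusion J hJ')
  g := ModuleCat.ofHom (Submodule.factor (Submodule.comap_mono hJ))
  zero := by
    ext x
    exact (Submodule.Quotient.mk_eq_zero _).mpr x.2

lemma idealQuotShortComplex_shortExact (hJ : J ≤ J') (hJ' : J' ≤ I) :
    (idealQuotShortComplex hJ hJ').ShortExact := by
  have hker : (idealQuotInclusion J hJ').ker = ⊥ := by
    rw [idealQuotInclusion, Submodule.ker_mapQ, ← Submodule.comap_comp,
      Submodule.subtype_comp_inclusion, Submodule.mkQ_map_self]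
  have hexact : (Submodule.factor (Submodule.comap_mono (f := I.subtype) hJ)).ker =
      (idealQuotInclusion J hJ').range := by
    rw [idealQuotInclusion, Submodule.factor, Submodule.ker_mapQ, Submodule.range_mapQ,
      Submodule.range_inclusion, Submodule.comap_id]
  exact ModuleCat.shortComplex_shortExact _ (LinearMap.exact_iff.mpr hexact)
    (LinearMap.ker_eq_bot.mp hker) (Submodule.factor_surjective (Submodule.comap_mono hJ))

/-- Multiplication by `r`, as a map from `R` to `((r) + J)/J`. -/
noncomputable def toIdealQuotSpanSup (J : Ideal R) (r : R) :
    R →ₗ[R] idealQuot (Ideal.span {r} ⊔ J) J :=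
  LinearMap.toSpanSingleton R _
    (Submodule.Quotient.mk ⟨r, Ideal.mem_sup_left (Ideal.mem_span_singleton_self r)⟩)

lemma ker_toIdealQuotSpanSup (J : Ideal R) (r : R) :
    (toIdealQuotSpanSup J r).ker = J.colon {r} := by
  ext s
  rw [LinearMap.mem_ker, Submodule.mem_colon_singleton, toIdealQuotSpanSup,
    LinearMap.toSpanSingleton_apply, ← Submodule.Quotient.mk_smul, Submodule.Quotient.mk_eq_zero]
  rfl

lemma toIdealQuotSpanSup_surjective (J : Ideal R) (r : R) :
    Function.Surjective (toIdealQuotSpanSup J r) := by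
  intro y
  obtain ⟨⟨_, hy⟩, rfl⟩ := Submodule.Quotient.mk_surjective _ y
  obtain ⟨s, b, hb, rfl⟩ := Ideal.mem_span_singleton_sup.mp hy
  refine ⟨s, ?_⟩
  rw [toIdealQuotSpanSup, LinearMap.toSpanSingleton_apply, ← Submodule.Quotient.mk_smul,
    Submodule.Quotient.eq]
  change s * r - (s * r + b) ∈ J
  rwa [sub_add_cancel_left, neg_mem_iff]

/-- The isomorphism `R ⧸ (J : r) ≅ ((r) + J)/J` induced by multiplication by `r`. -/
noncomputable def quotColonEquivIdealQuot (J : Ideal R) (r : R) :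
    (R ⧸ J.colon {r}) ≃ₗ[R] idealQuot (Ideal.span {r} ⊔ J) J :=
  (Submodule.quotEquivOfEq _ _ (ker_toIdealQuotSpanSup J r).symm).trans
    ((toIdealQuotSpanSup J r).quotKerEquivOfSurjective (toIdealQuotSpanSup_surjective J r))

end IdealQuot

section RegularVariables

variable {σ R : Type*} [CommRing R]

lemma mem_span_X_image_of_X_mul_mem {s : Set σ} {i : σ} (hi : i ∉ s) {f : MvPolynomial σ R}
    (hf : X i * f ∈ Ideal.span (X '' s : Set (MvPolynomial σ R))) :
    f ∈ Ideal.span (X '' s : Set (MvPolynomial σ R)) := by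
  rw [mem_ideal_span_X_image] at hf ⊢
  intro a ha
  obtain ⟨j, hj, hne⟩ := hf (Finsupp.single i 1 + a) (by
    rwa [mem_support_iff, coeff_X_mul, ← mem_support_iff])
  have hij : i ≠ j := (ne_of_mem_of_not_mem hj hi).symm
  exact ⟨j, hj, by simpa [Finsupp.single_apply, hij] using hne⟩

lemma ofList_map_X_smul_top (l : List σ) :
    Ideal.ofList (l.map X : List (MvPolynomial σ R)) • (⊤ : Ideal (MvPolynomial σ R)) =
      Ideal.span (X '' {i | i ∈ l}) := by
  rw [Ideal.smul_eq_mul, Ideal.mul_top, Ideal.ofList]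
  congr 1
  ext f
  simp

lemma isWeaklyRegular_map_X {l : List σ} (hl : l.Nodup) :
    IsWeaklyRegular (MvPolynomial σ R) (l.map X : List (MvPolynomial σ R)) := by
  refine (isWeaklyRegular_iff _ _).mpr fun i hi => ?_
  rw [List.length_map] at hi
  have hnotMem : l[i] ∉ {j | j ∈ l.take i} := by
    rw [Set.mem_ofPred_eq, List.mem_take_iff_getElem]
    grind [List.Nodup.getElem_inj_iff]
  rw [← List.map_take, ofList_map_X_smul_top, List.getElem_map,
    isSMulRegular_quotient_iff_mem_of_smul_mem]
  exact fun f hf => mem_span_X_image_of_X_mul_mem hnotMem hf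

lemma isWeaklyRegular_map_X_quotient {s t : Finset σ} (hst : Disjoint s t) :
    IsWeaklyRegular (MvPolynomial σ R ⧸ Ideal.span (X '' (s : Set σ) : Set (MvPolynomial σ R)))
      (t.toList.map X : List (MvPolynomial σ R)) := by
  have hnodup : (s.toList ++ t.toList).Nodup :=
    List.nodup_append'.mpr ⟨s.nodup_toList, t.nodup_toList, by
      simpa [List.Disjoint, Finset.disjoint_left] using hst⟩
  have hreg := isWeaklyRegular_map_X (R := R) hnodup
  rw [List.map_append, isWeaklyRegular_append_iff, ofList_map_X_smul_top] at hreg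
  have hset : {i | i ∈ s.toList} = (s : Set σ) := Set.ext fun _ => Finset.mem_toList
  exact hset ▸ hreg.2

end RegularVariables

section SquareFree

variable {K : Type} [Field K] {n : ℕ} {T : Finset (Fin n)} {P Q : ℕ → Prop}
  {I J : Ideal (MvPolynomial (Fin n) K)}

lemma sqMon_insert {i : Fin n} (hi : i ∉ T) : sqMon K (insert i T) = X i * sqMon K T :=
  Finset.prod_insert hi

lemma sqMon_eq_monomial (T : Finset (Fin n)) :
    sqMon K T = monomial (Finsupp.indicator T fun _ _ => 1) 1 := by
  rw [sqMon, Finsupp.indicator_eq_sum_single, monomial_sum_one]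
  rfl

lemma indicator_one_le_iff {σ : Type*} {U : Finset σ} {a : σ →₀ ℕ} :
    (Finsupp.indicator U fun _ _ => 1) ≤ a ↔ U ⊆ a.support := by
  classical
  simp only [Finsupp.le_def, Finsupp.indicator_apply, Finset.subset_iff, Finsupp.mem_support_iff,
    ← Nat.one_le_iff_ne_zero]
  refine forall_congr' fun i => ?_
  split_ifs <;> simp [*]

lemma mem_span_sqMon_image_iff {G : Set (Finset (Fin n))} {f : MvPolynomial (Fin n) K} :
    f ∈ Ideal.span (sqMon K '' G) ↔ ∀ a ∈ f.support, ∃ U ∈ G, U ⊆ a.support := by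
  have himage : sqMon K '' G = (fun a => monomial a (1 : K)) ''
      ((fun U => Finsupp.indicator U fun _ _ => 1) '' G) := by
    rw [Set.image_image]
    exact Set.image_congr fun U _ => sqMon_eq_monomial U
  simp only [himage, mem_ideal_span_monomial_image, Set.exists_mem_image, indicator_one_le_iff]

lemma sqMon_mem_span_sqMon_image_iff {G : Set (Finset (Fin n))} :
    sqMon K T ∈ Ideal.span (sqMon K '' G) ↔ ∃ U ∈ G, U ⊆ T := by
  classical
  have hsupport : (Finsupp.indicator T fun _ _ => 1).support = T := by
    ext i
    simp [Finsupp.indicator_apply]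
  rw [mem_span_sqMon_image_iff, sqMon_eq_monomial, support_monomial, if_neg one_ne_zero]
  simp only [Finset.mem_singleton, forall_eq, hsupport]

namespace GenBySqMonOfDeg

lemma mono (hPQ : ∀ k, P k → Q k) (hI : GenBySqMonOfDeg K P I) : GenBySqMonOfDeg K Q I :=
  hI.imp fun _ hG => ⟨fun T hT => hPQ _ (hG.1 T hT), hG.2⟩

lemma span_singleton (hT : P T.card) : GenBySqMonOfDeg K P (Ideal.span {sqMon K T}) :=
  ⟨{T}, by simpa using hT, by rw [Set.image_singleton]⟩

lemma sup (hI : GenBySqMonOfDeg K P I) (hJ : GenBySqMonOfDeg K P J) :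
    GenBySqMonOfDeg K P (I ⊔ J) := by
  obtain ⟨G, hG, rfl⟩ := hI
  obtain ⟨G', hG', rfl⟩ := hJ
  exact ⟨G ∪ G', fun T hT => hT.elim (hG T) (hG' T), by rw [Set.image_union, Ideal.span_union]⟩

lemma le_of_forall_sqMon_mem (hI : GenBySqMonOfDeg K P I)
    (h : ∀ T, sqMon K T ∈ I → sqMon K T ∈ J) : I ≤ J := by
  obtain ⟨G, -, rfl⟩ := hI
  rw [Ideal.span_le]
  rintro _ ⟨T, hT, rfl⟩
  exact h T (Ideal.subset_span ⟨T, hT, rfl⟩)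

lemma le_card_of_sqMon_mem {k : ℕ} (hI : GenBySqMonOfDeg K (k ≤ ·) I) (hT : sqMon K T ∈ I) :
    k ≤ T.card := by
  obtain ⟨G, hG, rfl⟩ := hI
  obtain ⟨U, hU, hUT⟩ := sqMon_mem_span_sqMon_image_iff.mp hT
  exact (hG U hU).trans (Finset.card_le_card hUT)

lemma sqMon_mem_sup_iff (hI : GenBySqMonOfDeg K P I) (hJ : GenBySqMonOfDeg K Q J) :
    sqMon K T ∈ I ⊔ J ↔ sqMon K T ∈ I ∨ sqMon K T ∈ J := by
  obtain ⟨G, -, rfl⟩ := hI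
  obtain ⟨G', -, rfl⟩ := hJ
  simp only [← Ideal.span_union, ← Set.image_union, sqMon_mem_span_sqMon_image_iff, Set.mem_union,
    or_and_right, exists_or]

lemma sqMon_mem_of_mul_mem (hJ : GenBySqMonOfDeg K P J) {f : MvPolynomial (Fin n) K}
    {a : Fin n →₀ ℕ} (ha : a ∈ f.support) (haT : a.support ⊆ T) (hf : f * sqMon K T ∈ J) :
    sqMon K T ∈ J := by
  obtain ⟨G, -, rfl⟩ := hJ
  rw [sqMon_eq_monomial, mem_span_sqMon_image_iff] at hf
  obtain ⟨U, hU, hUa⟩ := hf (a + Finsupp.indicator T fun _ _ => 1) (by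
    rwa [mem_support_iff, coeff_mul_monomial, mul_one, ← mem_support_iff])
  have hsupp : (a + Finsupp.indicator T fun _ _ => 1).support ⊆ T :=
    Finsupp.support_add.trans (Finset.union_subset haT (Finsupp.support_indicator_subset _ _))
  exact sqMon_mem_span_sqMon_image_iff.mpr ⟨U, hU, hUa.trans hsupp⟩

lemma colon_sqMon_eq_span_X_image_compl (hJ : GenBySqMonOfDeg K P J) (hT : sqMon K T ∉ J)
    (hmax : ∀ i ∉ T, X i * sqMon K T ∈ J) :
    J.colon {sqMon K T} = Ideal.span (X '' ((Tᶜ : Finset (Fin n)) : Set (Fin n))) := by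
  apply le_antisymm
  · intro f hf
    rw [mem_ideal_span_X_image]
    intro a ha
    by_contra! hvanish
    have haT : a.support ⊆ T := fun i hi => by
      by_contra hiT
      exact Finsupp.mem_support_iff.mp hi (hvanish i (by simpa using hiT))
    exact hT (hJ.sqMon_mem_of_mul_mem ha haT (Submodule.mem_colon_singleton.mp hf))
  · rw [Ideal.span_le]
    rintro _ ⟨i, hi, rfl⟩
    exact Submodule.mem_colon_singleton.mpr (hmax i (by simpa using hi))

lemma exists_colon_sqMon_eq_span_X_image_compl (hI : GenBySqMonOfDeg K P I)
    (hJ : GenBySqMonOfDeg K Q J) (hIJ : ¬ I ≤ J) :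
    ∃ T, sqMon K T ∈ I ∧ sqMon K T ∉ J ∧
      J.colon {sqMon K T} = Ideal.span (X '' ((Tᶜ : Finset (Fin n)) : Set (Fin n))) := by
  classical
  have hne : {T | sqMon K T ∈ I ∧ sqMon K T ∉ J}.Nonempty := by
    by_contra hempty
    exact hIJ (hI.le_of_forall_sqMon_mem fun T hT => not_not.mp fun hTJ => hempty ⟨T, hT, hTJ⟩)
  obtain ⟨T, hT⟩ := (Set.toFinite _).exists_maximal hne
  refine ⟨T, hT.prop.1, hT.prop.2, hJ.colon_sqMon_eq_span_X_image_compl hT.prop.2 fun i hi => ?_⟩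
  by_contra hiJ
  rw [← sqMon_insert hi] at hiJ
  have hiI : sqMon K (insert i T) ∈ I := sqMon_insert (K := K) hi ▸ I.mul_mem_left _ hT.prop.1
  exact hT.not_prop_of_gt (Finset.ssubset_insert hi) ⟨hiI, hiJ⟩

-- Nakayama gives `r ≡ 1` modulo the variables with `r I ⊆ J`; the constant term of `r` is then `1`,
-- so `J` contains every square-free monomial of `I`.
lemma maxGraded_smul_top_lt_top (hI : GenBySqMonOfDeg K P I) (hJ : GenBySqMonOfDeg K Q J)
    (hJI : J < I) :
    maxGraded K n • (⊤ : Submodule (MvPolynomial (Fin n) K) (idealQuot I J)) < ⊤ := by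
  rw [lt_top_iff_ne_top]
  intro htop
  obtain ⟨r, hr, hrI⟩ := Submodule.exists_sub_one_mem_and_smul_eq_zero_of_fg_of_le_smul
    (maxGraded K n) (⊤ : Submodule (MvPolynomial (Fin n) K) (idealQuot I J))
    Module.Finite.fg_top htop.ge
  have hr0 : (0 : Fin n →₀ ℕ) ∈ r.support := by
    rw [mem_support_iff]
    intro hcoeff
    rw [maxGraded, ← Set.image_univ, mem_ideal_span_X_image] at hr
    obtain ⟨i, -, hi⟩ := hr 0 (by simp [hcoeff])
    exact hi rfl
  refine hJI.not_ge (hI.le_of_forall_sqMon_mem fun T hT => ?_)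
  refine hJ.sqMon_mem_of_mul_mem hr0 (by simp) ?_
  have hrT : (Submodule.Quotient.mk (r • (⟨sqMon K T, hT⟩ : I)) : idealQuot I J) = 0 :=
    hrI (Submodule.Quotient.mk ⟨sqMon K T, hT⟩) Submodule.mem_top
  exact (Submodule.Quotient.mk_eq_zero (Submodule.comap I.subtype J)).mp hrT

lemma extVanishesBelow_idealQuot_span_sqMon_sup (hJ : GenBySqMonOfDeg K P J) (hT : sqMon K T ∉ J)
    (hcolon : J.colon {sqMon K T} = Ideal.span (X '' ((Tᶜ : Finset (Fin n)) : Set (Fin n)))) :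
    ExtVanishesBelow T.card (ModuleCat.of (MvPolynomial (Fin n) K) (_ ⧸ maxGraded K n))
      (ModuleCat.of _ (idealQuot (Ideal.span {sqMon K T} ⊔ J) J)) := by
  have hlt : J < Ideal.span {sqMon K T} ⊔ J :=
    right_lt_sup.mpr fun hle => hT ((Ideal.span_singleton_le_iff_mem _).mp hle)
  have hgen : GenBySqMonOfDeg K (fun _ => True) (Ideal.span {sqMon K T} ⊔ J) :=
    (span_singleton trivial).sup (hJ.mono fun _ _ => trivial)
  have hreg : IsWeaklyRegular (idealQuot (Ideal.span {sqMon K T} ⊔ J) J)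
      (T.toList.map X : List (MvPolynomial (Fin n) K)) := by
    rw [← (quotColonEquivIdealQuot J (sqMon K T)).isWeaklyRegular_congr, hcolon]
    exact isWeaklyRegular_map_X_quotient disjoint_compl_left
  have hmem : ∀ r ∈ (T.toList.map X : List (MvPolynomial (Fin n) K)), r ∈ maxGraded K n := by
    rw [List.forall_mem_map]
    exact fun i _ => Ideal.subset_span ⟨i, rfl⟩
  simpa only [List.length_map, Finset.length_toList] using
    extVanishesBelow_length_of_isWeaklyRegular (hgen.maxGraded_smul_top_lt_top hJ hlt) hmem hreg

theorem extVanishesBelow_idealQuot {k : ℕ} (hI : GenBySqMonOfDeg K P I)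
    (hJ : GenBySqMonOfDeg K Q J) (hJI : J ≤ I)
    (hdeg : ∀ T, sqMon K T ∈ I → sqMon K T ∉ J → k ≤ T.card) :
    ExtVanishesBelow k (ModuleCat.of (MvPolynomial (Fin n) K) (_ ⧸ maxGraded K n))
      (ModuleCat.of _ (idealQuot I J)) := by
  replace hJ : GenBySqMonOfDeg K (fun _ => True) J := hJ.mono fun _ _ => trivial
  induction J using WellFoundedGT.induction with
  | ind J ih =>
  by_cases hIJ : I ≤ J
  · have : Subsingleton (idealQuot I J) := by
      rwa [Submodule.Quotient.subsingleton_iff, Submodule.comap_subtype_eq_top]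
    exact .of_isZero (ModuleCat.isZero_of_subsingleton _)
  obtain ⟨T, hTI, hTJ, hcolon⟩ := hI.exists_colon_sqMon_eq_span_X_image_compl hJ hIJ
  have hle : Ideal.span {sqMon K T} ⊔ J ≤ I :=
    sup_le ((Ideal.span_singleton_le_iff_mem I).mpr hTI) hJI
  have hlt : J < Ideal.span {sqMon K T} ⊔ J :=
    right_lt_sup.mpr fun hle => hTJ ((Ideal.span_singleton_le_iff_mem _).mp hle)
  have hsub : ExtVanishesBelow k _ (ModuleCat.of _ (idealQuot (Ideal.span {sqMon K T} ⊔ J) J)) :=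
    (hJ.extVanishesBelow_idealQuot_span_sqMon_sup hTJ hcolon).mono (hdeg T hTI hTJ)
  have hquot : ExtVanishesBelow k _ (ModuleCat.of _ (idealQuot I (Ideal.span {sqMon K T} ⊔ J))) :=
    ih _ hlt hle (fun U hUI hUJ => hdeg U hUI fun h => hUJ (hlt.le h))
      ((span_singleton trivial).sup hJ)
  exact .of_shortExact_middle (idealQuotShortComplex_shortExact hlt.le hle) hsub hquot

end GenBySqMonOfDeg

end SquareFree

theorem stmt_2_general (n : ℕ) (K : Type) [Field K] (d : ℕ) {P : ℕ → Prop}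
    (I J H : Ideal (MvPolynomial (Fin n) K)) (hJI : J < I)
    (hI : GenBySqMonOfDeg K (fun k => d ≤ k) I) (hJ : GenBySqMonOfDeg K P J)
    (hH : GenBySqMonOfDeg K (fun k => d + 1 ≤ k) H) :
    moduleDepth (maxGraded K n) (idealQuot I J) = (d : ℕ∞) ↔
      moduleDepth (maxGraded K n) (idealQuot (I + H) J) = (d : ℕ∞) := by
  have hIH : GenBySqMonOfDeg K (fun k => d ≤ k) (I + H) :=
    hI.sup (hH.mono fun _ => Nat.le_of_succ_le)
  have hle : I ≤ I + H := le_sup_left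
  have hdeg : ∀ T, sqMon K T ∈ I + H → sqMon K T ∉ I → d + 1 ≤ T.card := fun T hT hTI =>
    hH.le_card_of_sqMon_mem (((hI.sqMon_mem_sup_iff hH).mp hT).resolve_left hTI)
  exact moduleDepth_eq_iff_of_shortExact (idealQuotShortComplex_shortExact hJI.le hle)
    (hI.maxGraded_smul_top_lt_top hJ hJI)
    (hIH.maxGraded_smul_top_lt_top hJ (hJI.trans_le hle))
    (hI.extVanishesBelow_idealQuot hJ hJI.le fun _ hT _ => hI.le_card_of_sqMon_mem hT)
    (hIH.extVanishesBelow_idealQuot hI hle hdeg)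

/-- Lemma 1.4. -/
theorem stmt_2 (n : ℕ) (K : Type) [Field K] (d : ℕ) (hd : 0 < d)
    (I J H : Ideal (MvPolynomial (Fin n) K)) (hI0 : I ≠ ⊥) (hJ0 : J ≠ ⊥)
    (hJI : J < I) (hI : GenBySqMonOfDeg K (fun k => d ≤ k) I)
    (hJ : GenBySqMonOfDeg K (fun k => d + 1 ≤ k) J)
    (hH : GenBySqMonOfDeg K (fun k => k = d + 1) H) :
    moduleDepth (maxGraded K n) (idealQuot I J) = (d : ℕ∞) ↔
      moduleDepth (maxGraded K n) (idealQuot (I + H) J) = (d : ℕ∞) :=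
  stmt_2_general n K d I J H hJI hI hJ (hH.mono fun _ => Eq.ge)
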